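/- arXiv:2603.05973 — 2 statements merged into one kernel-verified Lean document; each statement's English description precedes it below -/
import Mathlib

section
/- Let F be a k-graph, let σ be an ordering of V(F), and let 2 ≤ ℓ ≤ k be an integer. Then σ is an ℓ-vanishing order of F if and only if for every (ℓ−1)-element subset S of V(F), the induced ordering σ|_{V(F)∖S} is a 1-vanishing order of the link L_F(S). -/
/-!
Two edges `e`, `e'` containing a common `ℓ`-set `X` must give `X` the same set of positions; since
positions increase along `σ`, this forces every single vertex of `X` to have the same position in
`e` and in `e'`. So an injective `σ` is `ℓ`-vanishing exactly when
`rankIn e σ v = rankIn e' σ v` for all such `e`, `e'`, `X` and all `v ∈ X`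
(`exists_coloring_iff`).

For `X = S ∪ {v}` with `v ∉ S`, deleting `S` from an edge lowers the position of `v` by
`#{s ∈ S | σ s ≤ σ v}`, which does not depend on the edge (`rankIn_sdiff_add`). Hence the pointwise
condition for all `ℓ`-sets `X` is the same as the pointwise condition with `ℓ = 1` for the links of
all `(ℓ-1)`-sets `S`. Replacing `σ` by the ordering it induces on `V \ S` does not change positions
inside `e \ S` (`rankIn_rankIn`).
-/

open Finset Filter

variable {α : Type*} {β : Type*}

/-- `(V, E)` is a `k`-uniform hypergraph: every edge is a `k`-element subset of `V`. -/
def IsKGraph [DecidableEq α] (k : ℕ) (V : Finset α) (E : Finset (Finset α)) : Prop :=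
  ∀ e ∈ E, e ⊆ V ∧ e.card = k

/-- The degree of a vertex set `S`: the number of edges containing `S`. -/
def degS [DecidableEq α] (E : Finset (Finset α)) (S : Finset α) : ℕ :=
  (E.filter fun e => S ⊆ e).card

/-- The minimum `ℓ`-degree of a hypergraph: the minimum of `degS` over `ℓ`-subsets of `V`. -/
noncomputable def minDeg [DecidableEq α] (ℓ : ℕ) (V : Finset α) (E : Finset (Finset α)) : ℕ :=
  sInf {d | ∃ S ⊆ V, S.card = ℓ ∧ d = degS E S}

/-- The edge set of the link of `S`: `{e \ S : S ⊆ e ∈ E}`. -/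
def linkE [DecidableEq α] (E : Finset (Finset α)) (S : Finset α) : Finset (Finset α) :=
  (E.filter fun e => S ⊆ e).image fun e => e \ S

/-- The rank (1-based position) of `x` within `T` with respect to `σ`. -/
def rankIn (T : Finset α) (σ : α → ℕ) (x : α) : ℕ :=
  (T.filter fun y => σ y ≤ σ x).card

/-- `σ` is an ordering of `V`, i.e. a bijection `V → {1, …, |V|}`. -/
def IsOrdering (V : Finset α) (σ : α → ℕ) : Prop :=
  Set.BijOn σ ↑V (Set.Icc 1 V.card)

/-- `σ` is an `ℓ`-vanishing order of the `k`-graph `(V, E)`: it is an ordering of `V` and there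
is a coloring `φ` of `ℓ`-sets of vertices such that for every edge `e` and every `ℓ`-subset `X`
of `e`, `φ X` equals the set of positions that `X` occupies inside `e` under `σ`. -/
def IsVanishingOrder [DecidableEq α] (ℓ : ℕ) (V : Finset α) (E : Finset (Finset α))
    (σ : α → ℕ) : Prop :=
  IsOrdering V σ ∧
    ∃ φ : Finset α → Finset ℕ,
      ∀ e ∈ E, ∀ X ⊆ e, X.card = ℓ → φ X = X.image (rankIn e σ)

/-- The hypergraph `(VH, EH)` contains a copy of `(VF, EF)`. -/
def ContainsCopy [DecidableEq α] [DecidableEq β] (VF : Finset α) (EF : Finset (Finset α))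
    (VH : Finset β) (EH : Finset (Finset β)) : Prop :=
  ∃ f : α → β, Set.InjOn f ↑VF ∧ (∀ v ∈ VF, f v ∈ VH) ∧ ∀ e ∈ EF, e.image f ∈ EH

/-- `ex_ℓ(n, F)`: the maximum of `δ_ℓ(H)` over all `F`-free `k`-graphs `H` on `n` vertices. -/
noncomputable def exDeg [DecidableEq α] (k ℓ n : ℕ) (VF : Finset α)
    (EF : Finset (Finset α)) : ℕ :=
  sSup {d | ∃ E : Finset (Finset (Fin n)), (∀ e ∈ E, e.card = k) ∧
    ¬ ContainsCopy VF EF (Finset.univ : Finset (Fin n)) E ∧ d = minDeg ℓ Finset.univ E}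

/-- The `ℓ`-degree Turán density of the `k`-graph `F = (VF, EF)` equals `x`, i.e.
`ex_ℓ(n, F) / C(n-ℓ, k-ℓ) → x` as `n → ∞` (this limit is known to exist). -/
def HasTuranDensity [DecidableEq α] (k ℓ : ℕ) (VF : Finset α) (EF : Finset (Finset α))
    (x : ℝ) : Prop :=
  Tendsto (fun n : ℕ => (exDeg k ℓ n VF EF : ℝ) / ((n - ℓ).choose (k - ℓ) : ℝ)) atTop (nhds x)

/-- The `t`-uniform hypergraph `(V, E)` is `t`-partite: the vertices can be split into `t`
parts so that every edge contains exactly one vertex from each part. -/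
def IsPartite (t : ℕ) (V : Finset α) (E : Finset (Finset α)) : Prop :=
  ∃ P : α → Fin t, ∀ e ∈ E, ∀ i : Fin t, (e.filter fun v => P v = i).card = 1

theorem rankIn_le_rankIn_iff {T : Finset α} {σ : α → ℕ} {x y : α} (hy : y ∈ T) :
    rankIn T σ y ≤ rankIn T σ x ↔ σ y ≤ σ x := by
  unfold rankIn
  constructor
  · intro h
    by_contra! hlt
    refine absurd h (not_le.mpr (Finset.card_lt_card ?_))
    rw [Finset.ssubset_iff_of_subset]
    · exact ⟨y, by simp [hy], by simp [hlt]⟩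
    · intro z hz
      simp only [Finset.mem_filter] at hz ⊢
      exact ⟨hz.1, by omega⟩
  · intro h
    refine Finset.card_le_card fun z hz => ?_
    simp only [Finset.mem_filter] at hz ⊢
    exact ⟨hz.1, by omega⟩

theorem rankIn_rankIn {T U : Finset α} (hTU : T ⊆ U) (σ : α → ℕ) (x : α) :
    rankIn T (rankIn U σ) x = rankIn T σ x := by
  conv_lhs => unfold rankIn
  conv_rhs => unfold rankIn
  exact congrArg Finset.card
    (Finset.filter_congr fun y hy => rankIn_le_rankIn_iff (hTU hy))

theorem rankIn_injOn {T : Finset α} {σ : α → ℕ} (h : Set.InjOn σ ↑T) :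
    Set.InjOn (rankIn T σ) ↑T := fun _ hx _ hy hxy =>
  h hx hy (le_antisymm ((rankIn_le_rankIn_iff hx).1 hxy.le) ((rankIn_le_rankIn_iff hy).1 hxy.ge))

theorem isOrdering_rankIn {T : Finset α} {σ : α → ℕ} (h : Set.InjOn σ ↑T) :
    IsOrdering T (rankIn T σ) := by
  have hmaps : Set.MapsTo (rankIn T σ) (↑T : Set α) (↑(Finset.Icc 1 T.card) : Set ℕ) := by
    intro x hx
    have hx' : x ∈ T := hx
    simp only [Finset.coe_Icc, Set.mem_Icc, rankIn]
    exact ⟨Finset.card_pos.mpr ⟨x, by simp [hx']⟩, Finset.card_filter_le _ _⟩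
  have hsurj := Finset.surjOn_of_injOn_of_card_le (rankIn T σ) hmaps (rankIn_injOn h) (by simp)
  rw [Finset.coe_Icc] at hmaps hsurj
  exact ⟨hmaps, rankIn_injOn h, hsurj⟩

theorem rankIn_sdiff_add [DecidableEq α] {e S : Finset α} (hS : S ⊆ e) (σ : α → ℕ) (x : α) :
    rankIn (e \ S) σ x + (S.filter fun y => σ y ≤ σ x).card = rankIn e σ x := by
  unfold rankIn
  rw [← Finset.card_union_of_disjoint
    (Finset.disjoint_filter_filter Finset.sdiff_disjoint), ← Finset.filter_union,
    Finset.sdiff_union_of_subset hS]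

/-- Positions increase along `σ`, so the set of values at most `rankIn e σ v` occupied by `X` has a
size depending only on `X`, `σ` and `v`. -/
theorem card_filter_image_rankIn [DecidableEq α] {e X : Finset α} {σ : α → ℕ}
    (h : Set.InjOn σ ↑e) (hX : X ⊆ e) (v : α) :
    ((X.image (rankIn e σ)).filter fun n => n ≤ rankIn e σ v).card = rankIn X σ v := by
  rw [Finset.filter_image, Finset.card_image_of_injOn]
  · exact congrArg Finset.card
      (Finset.filter_congr fun y hy => rankIn_le_rankIn_iff (hX hy))
  · exact (rankIn_injOn h).mono fun y hy => hX (Finset.mem_filter.1 hy).1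

/-- If an edge `e'` assigns to `X` the same set of positions as `e`, then no vertex of `X` has a
smaller position in `e` than in `e'`. -/
theorem rankIn_le_of_image_eq [DecidableEq α] {e e' X : Finset α} {σ : α → ℕ}
    (h : Set.InjOn σ ↑e) (h' : Set.InjOn σ ↑e') (hX : X ⊆ e) (hX' : X ⊆ e')
    (heq : X.image (rankIn e σ) = X.image (rankIn e' σ)) {v : α} (hv : v ∈ X) :
    rankIn e' σ v ≤ rankIn e σ v := by
  by_contra! hlt
  have h1 := card_filter_image_rankIn h hX v
  have h2 := card_filter_image_rankIn h' hX' v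
  rw [heq] at h1
  refine absurd (h1.trans h2.symm) (Finset.card_lt_card ?_).ne
  rw [Finset.ssubset_iff_of_subset]
  · exact ⟨rankIn e' σ v, by simpa using ⟨v, hv, rfl⟩, by simp [hlt]⟩
  · intro n hn
    simp only [Finset.mem_filter] at hn ⊢
    exact ⟨hn.1, by omega⟩

/-- A coloring as in the definition of an `ℓ`-vanishing order exists iff any two edges sharing an
`ℓ`-set `X` give each vertex of `X` the same position. -/
theorem exists_coloring_iff [DecidableEq α] {ℓ : ℕ} {E : Finset (Finset α)} {σ : α → ℕ}
    (h : ∀ e ∈ E, Set.InjOn σ ↑e) :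
    (∃ φ : Finset α → Finset ℕ,
      ∀ e ∈ E, ∀ X ⊆ e, X.card = ℓ → φ X = X.image (rankIn e σ)) ↔
    ∀ e ∈ E, ∀ e' ∈ E, ∀ X ⊆ e, X ⊆ e' → X.card = ℓ →
      ∀ v ∈ X, rankIn e σ v = rankIn e' σ v := by
  classical
  constructor
  · rintro ⟨φ, hφ⟩ e he e' he' X hX hX' hc v hv
    have heq := (hφ e he X hX hc).symm.trans (hφ e' he' X hX' hc)
    exact le_antisymm (rankIn_le_of_image_eq (h e' he') (h e he) hX' hX heq.symm hv)
      (rankIn_le_of_image_eq (h e he) (h e' he') hX hX' heq hv)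
  · intro H
    -- Color `X` by its positions in an arbitrarily chosen edge containing it.
    refine ⟨fun X => if hX : ∃ e ∈ E, X ⊆ e then X.image (rankIn hX.choose σ) else ∅, ?_⟩
    intro e he X hX hc
    have hex : ∃ e ∈ E, X ⊆ e := ⟨e, he, hX⟩
    simp only [dif_pos hex]
    exact Finset.image_congr fun v hv =>
      H _ hex.choose_spec.1 e he X hex.choose_spec.2 hX hc v hv

/-- For `2 ≤ ℓ ≤ k`, an ordering `σ` of `V(F)` is an `ℓ`-vanishing order of the
`k`-graph `F` iff for every `(ℓ-1)`-subset `S` of `V(F)`, the induced ordering of `V(F) \ S` is a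
`1`-vanishing order of the link of `S`. -/
theorem stmt_5 {α : Type*} [DecidableEq α] (k ℓ : ℕ) (hℓ : 2 ≤ ℓ) (hℓk : ℓ ≤ k)
    (V : Finset α) (E : Finset (Finset α)) (hF : IsKGraph k V E)
    (σ : α → ℕ) (hσ : IsOrdering V σ) :
    IsVanishingOrder ℓ V E σ ↔
      ∀ S ⊆ V, S.card = ℓ - 1 →
        IsVanishingOrder 1 (V \ S) (linkE E S) (rankIn (V \ S) σ) := by
  have hinj : Set.InjOn σ ↑V := hσ.injOn
  have hE : ∀ e ∈ E, Set.InjOn σ ↑e := fun e he => hinj.mono (by exact_mod_cast (hF e he).1)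
  have hVS : ∀ S : Finset α, Set.InjOn σ ↑(V \ S) := fun S =>
    hinj.mono (by exact_mod_cast Finset.sdiff_subset)
  have hlink : ∀ S : Finset α, ∀ f ∈ linkE E S, Set.InjOn (rankIn (V \ S) σ) ↑f := by
    intro S f hf
    simp only [linkE, Finset.mem_image, Finset.mem_filter] at hf
    obtain ⟨e, ⟨he, -⟩, rfl⟩ := hf
    exact (rankIn_injOn (hVS S)).mono
      (by exact_mod_cast Finset.sdiff_subset_sdiff (hF e he).1 subset_rfl)
  have hrank : ∀ S : Finset α, ∀ e ∈ E, ∀ v,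
      rankIn (e \ S) (rankIn (V \ S) σ) v = rankIn (e \ S) σ v := fun S e he v =>
    rankIn_rankIn (Finset.sdiff_subset_sdiff (hF e he).1 subset_rfl) σ v
  unfold IsVanishingOrder
  rw [exists_coloring_iff hE]
  constructor
  · rintro ⟨-, H⟩ S hS hSc
    refine ⟨isOrdering_rankIn (hVS S), (exists_coloring_iff (hlink S)).2 ?_⟩
    intro f hf f' hf' X hX hX' hXc v hv
    simp only [linkE, Finset.mem_image, Finset.mem_filter] at hf hf'
    obtain ⟨e, ⟨he, hSe⟩, rfl⟩ := hf
    obtain ⟨e', ⟨he', hSe'⟩, rfl⟩ := hf'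
    rw [hrank S e he, hrank S e' he']
    have hve := Finset.mem_sdiff.1 (hX hv)
    have hve' := Finset.mem_sdiff.1 (hX' hv)
    have := H e he e' he' (insert v S) (Finset.insert_subset hve.1 hSe)
      (Finset.insert_subset hve'.1 hSe')
      (by rw [Finset.card_insert_of_notMem hve.2]; omega) v (Finset.mem_insert_self v S)
    rw [← rankIn_sdiff_add hSe, ← rankIn_sdiff_add hSe'] at this
    omega
  · intro H
    refine ⟨hσ, ?_⟩
    intro e he e' he' X hX hX' hXc v hv
    have hSe : X.erase v ⊆ e := (Finset.erase_subset v X).trans hX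
    have hSe' : X.erase v ⊆ e' := (Finset.erase_subset v X).trans hX'
    have hS := (H (X.erase v) (hSe.trans (hF e he).1)
      (by rw [Finset.card_erase_of_mem hv, hXc])).2
    rw [exists_coloring_iff (hlink _)] at hS
    have := hS (e \ X.erase v)
      (Finset.mem_image.2 ⟨e, Finset.mem_filter.2 ⟨he, hSe⟩, rfl⟩) (e' \ X.erase v)
      (Finset.mem_image.2 ⟨e', Finset.mem_filter.2 ⟨he', hSe'⟩, rfl⟩) {v}
      (by simp [hX hv]) (by simp [hX' hv]) (by simp) v (by simp)
    rw [hrank _ e he, hrank _ e' he'] at this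
    rw [← rankIn_sdiff_add hSe, ← rankIn_sdiff_add hSe', this]
end

section
/- Let 2 ≤ ℓ < k and r > k be integers, and let K_r^{(ℓ)+} be the k-expansion of the complete ℓ-graph K_r^{(ℓ)} on r vertices. Then there exists an (ℓ−2)-element subset S of V(K_r^{(ℓ)+}) whose link is not a (k−ℓ+2)-partite (k−ℓ+2)-graph; consequently, K_r^{(ℓ)+} has no (ℓ−1)-vanishing order. -/
/-!
Fix the `ℓ - 2` original vertices `S = {0, …, ℓ - 3}`. Any two of the remaining
`r - ℓ + 2 > k - ℓ + 2` original vertices lie together with `S` in an edge of the expansion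
(`pairEdge`), so a partition of the link of `S` into `k - ℓ + 2` parts would, by pigeonhole, put
two vertices of some link edge into the same part.

Now let `σ` be an `(ℓ - 1)`-vanishing order with coloring `φ`. The rank function of an edge is
strictly increasing along `σ`, so the set `φ X` of positions of an `(ℓ - 1)`-set `X` already
determines the rank of each element of `X` (`rankIn_eq_of_image_eq`): two edges sharing `X` induce
the same ranks on `X`. Applied to `X = S ∪ {v}` for varying `v`, this shows that within the edges
`pairEdge k ℓ v w` the rank of every original vertex does not depend on the edge. As any two
original vertices lie in a common such edge, where their ranks differ, this yields an injection of
the `r` original vertices into the `k` possible ranks, contradicting `r > k`.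
-/


open Finset Filter

variable {α : Type*} {β : Type*}

/-- Vertex type for the `k`-expansion of an `ℓ`-graph on `ℕ`: original vertices are `Sum.inl i`,
and the `j`-th expansion vertex of the edge `e` is `Sum.inr (e, j)`. -/
abbrev ExpV : Type := ℕ ⊕ (Finset ℕ × ℕ)

/-- The vertex set of the `k`-expansion `K_r^{(ℓ)+}` of the complete `ℓ`-graph on `r` vertices:
the `r` original vertices together with `k - ℓ` fresh vertices for each `ℓ`-subset of them. -/
def expVerts (k ℓ r : ℕ) : Finset ExpV :=
  ((range r).image Sum.inl) ∪ (((range r).powersetCard ℓ ×ˢ range (k - ℓ)).image Sum.inr)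

/-- The edge set of the `k`-expansion `K_r^{(ℓ)+}`: each edge `e` of `K_r^{(ℓ)}` is enlarged by
its own `k - ℓ` fresh vertices, distinct edges getting disjoint sets of fresh vertices. -/
def expEdges (k ℓ r : ℕ) : Finset (Finset ExpV) :=
  ((range r).powersetCard ℓ).image fun e =>
    e.image Sum.inl ∪ (range (k - ℓ)).image fun j => Sum.inr (e, j)

/-! ### Edges of the expansion -/

/-- The edge of the `k`-expansion that enlarges the `ℓ`-set `A`. -/
def edgeOf (k ℓ : ℕ) (A : Finset ℕ) : Finset ExpV :=
  A.image Sum.inl ∪ (range (k - ℓ)).image fun j => Sum.inr (A, j)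

/-- The `ℓ`-set `{0, …, ℓ - 3} ∪ {v, w}` (for distinct `v, w ≥ ℓ - 2`). -/
def pairSet (ℓ v w : ℕ) : Finset ℕ := insert v (insert w (range (ℓ - 2)))

/-- The edge of the expansion over `{0, …, ℓ - 3} ∪ {v, w}`. -/
def pairEdge (k ℓ v w : ℕ) : Finset ExpV := edgeOf k ℓ (pairSet ℓ v w)

lemma pairEdge_comm (k ℓ v w : ℕ) : pairEdge k ℓ v w = pairEdge k ℓ w v := by
  unfold pairEdge pairSet
  rw [Finset.insert_comm]

lemma inl_mem_edgeOf {k ℓ : ℕ} {A : Finset ℕ} {x : ℕ} :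
    (Sum.inl x : ExpV) ∈ edgeOf k ℓ A ↔ x ∈ A := by
  simp [edgeOf]

lemma inl_mem_pairEdge {k ℓ v w x : ℕ} :
    (Sum.inl x : ExpV) ∈ pairEdge k ℓ v w ↔ x = v ∨ x = w ∨ x < ℓ - 2 := by
  simp [pairEdge, inl_mem_edgeOf, pairSet]

lemma pairSet_mem {ℓ r v w : ℕ} (hℓ : 2 ≤ ℓ) (hv : ℓ - 2 ≤ v) (hw : ℓ - 2 ≤ w) (hvw : v ≠ w)
    (hvr : v < r) (hwr : w < r) : pairSet ℓ v w ∈ (range r).powersetCard ℓ := by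
  rw [Finset.mem_powersetCard]
  constructor
  · intro x hx
    simp only [pairSet, Finset.mem_insert, Finset.mem_range] at hx ⊢
    omega
  · unfold pairSet
    rw [Finset.card_insert_of_notMem, Finset.card_insert_of_notMem, Finset.card_range]
    · omega
    · simp; omega
    · simp; omega

lemma pairEdge_mem {k ℓ r v w : ℕ} (hℓ : 2 ≤ ℓ) (hv : ℓ - 2 ≤ v) (hw : ℓ - 2 ≤ w) (hvw : v ≠ w)
    (hvr : v < r) (hwr : w < r) : pairEdge k ℓ v w ∈ expEdges k ℓ r :=
  Finset.mem_image.2 ⟨_, pairSet_mem hℓ hv hw hvw hvr hwr, rfl⟩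

lemma edge_card_le {k ℓ r : ℕ} (hℓk : ℓ < k) {e : Finset ExpV} (he : e ∈ expEdges k ℓ r) :
    e.card ≤ k := by
  obtain ⟨A, hA, rfl⟩ := Finset.mem_image.1 he
  have h1 : (A.image (Sum.inl : ℕ → ExpV)).card ≤ A.card := Finset.card_image_le
  have h2 : ((range (k - ℓ)).image fun j => (Sum.inr (A, j) : ExpV)).card ≤ _ :=
    Finset.card_image_le
  rw [Finset.card_range] at h2
  have h3 := (Finset.mem_powersetCard.1 hA).2
  have h4 := Finset.card_union_le (A.image (Sum.inl : ℕ → ExpV))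
    ((range (k - ℓ)).image fun j => (Sum.inr (A, j) : ExpV))
  omega

lemma edge_subset {k ℓ r : ℕ} {e : Finset ExpV} (he : e ∈ expEdges k ℓ r) :
    e ⊆ expVerts k ℓ r := by
  obtain ⟨A, hA, rfl⟩ := Finset.mem_image.1 he
  have hA' := (Finset.mem_powersetCard.1 hA).1
  refine Finset.union_subset_union (Finset.image_subset_image hA') ?_
  intro x hx
  obtain ⟨j, hj, rfl⟩ := Finset.mem_image.1 hx
  exact Finset.mem_image.2 ⟨(A, j), Finset.mem_product.2 ⟨hA, hj⟩, rfl⟩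

/-! ### Ranks and positions -/

/-- Ranks within `e` compare as `σ` does; since `y` may lie outside `e`, only `x ∈ e` forces
the strict inequality of counts. -/
lemma rankIn_le_iff {γ : Type*} {e : Finset γ} {σ : γ → ℕ} {x y : γ} (hx : x ∈ e) :
    rankIn e σ x ≤ rankIn e σ y ↔ σ x ≤ σ y := by
  constructor
  · intro h
    by_contra! hlt
    have : rankIn e σ y < rankIn e σ x := by
      apply Finset.card_lt_card
      rw [Finset.ssubset_iff_of_subset]
      · exact ⟨x, by simp [hx], by simp [hlt]⟩
      · intro z hz
        simp only [Finset.mem_filter] at hz ⊢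
        exact ⟨hz.1, by omega⟩
    omega
  · intro h
    apply Finset.card_le_card
    intro z hz
    simp only [Finset.mem_filter] at hz ⊢
    exact ⟨hz.1, by omega⟩

lemma rankIn_inj {γ : Type*} {e : Finset γ} {σ : γ → ℕ} (hσ : Set.InjOn σ ↑e) {x y : γ}
    (hx : x ∈ e) (hy : y ∈ e) (h : rankIn e σ x = rankIn e σ y) : x = y :=
  hσ hx hy (le_antisymm ((rankIn_le_iff hx).1 h.le) ((rankIn_le_iff hy).1 h.ge))

/-- The rank of `x ∈ X` within `X` can be read off from the set of positions of `X` in `e`. -/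
lemma card_filter_positions {γ : Type*} [DecidableEq γ] {e X : Finset γ} {σ : γ → ℕ}
    (hσ : Set.InjOn σ ↑e) (hX : X ⊆ e) (x : γ) :
    ((X.image (rankIn e σ)).filter fun n => n ≤ rankIn e σ x).card = rankIn X σ x := by
  rw [Finset.filter_image, Finset.card_image_of_injOn]
  · unfold rankIn
    congr 1
    apply Finset.filter_congr
    intro y hy
    exact rankIn_le_iff (hX hy)
  · intro a ha b hb hab
    simp only [Finset.coe_filter, Set.mem_ofPred_eq] at ha hb
    exact rankIn_inj hσ (hX ha.1) (hX hb.1) hab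

/-- If `X` occupies the same set of positions in `e` and in `f`, then each of its elements has the
same rank in `e` as in `f`. -/
lemma rankIn_eq_of_image_eq {γ : Type*} [DecidableEq γ] {e f X : Finset γ} {σ : γ → ℕ}
    (he : Set.InjOn σ ↑e) (hf : Set.InjOn σ ↑f) (hXe : X ⊆ e) (hXf : X ⊆ f)
    (h : X.image (rankIn e σ) = X.image (rankIn f σ)) {x : γ} (hx : x ∈ X) :
    rankIn e σ x = rankIn f σ x := by
  have h1 := card_filter_positions he hXe x
  have h2 := card_filter_positions hf hXf x
  rw [h] at h1
  have hme : rankIn e σ x ∈ X.image (rankIn f σ) := h ▸ Finset.mem_image_of_mem _ hx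
  have hmf : rankIn f σ x ∈ X.image (rankIn f σ) := Finset.mem_image_of_mem _ hx
  have key : ∀ (T : Finset ℕ) (a b : ℕ), b ∈ T → (T.filter fun n => n ≤ a).card =
      (T.filter fun n => n ≤ b).card → b ≤ a := by
    intro T a b hb hab
    by_contra! hlt
    refine absurd hab (ne_of_lt (Finset.card_lt_card ?_))
    rw [Finset.ssubset_iff_of_subset]
    · exact ⟨b, by simp [hb], by simp [hlt]⟩
    · intro z hz
      simp only [Finset.mem_filter] at hz ⊢
      exact ⟨hz.1, by omega⟩
  exact le_antisymm (key _ _ _ hme (h2.trans h1.symm)) (key _ _ _ hmf (h1.trans h2.symm))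

/-! ### The link of `{0, …, ℓ - 3}` -/

/-- There are more than `k - ℓ + 2` original vertices outside `{0, …, ℓ - 3}`, and any two of them
lie in a common edge of the link, so no two may share a part. -/
lemma link_not_partite {k ℓ r : ℕ} (hℓ : 2 ≤ ℓ) (hℓk : ℓ < k) (hkr : k < r) (V : Finset ExpV) :
    ¬ IsPartite (k - ℓ + 2) V (linkE (expEdges k ℓ r) ((range (ℓ - 2)).image Sum.inl)) := by
  rintro ⟨P, hP⟩
  have hcard : (Finset.univ : Finset (Fin (k - ℓ + 2))).card < (Finset.Ico (ℓ - 2) r).card := by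
    simp; omega
  obtain ⟨v, hv, w, hw, hvw, hPvw⟩ := Finset.exists_ne_map_eq_of_card_lt_of_maps_to hcard
    (f := fun i => P (Sum.inl i)) (fun _ _ => Finset.mem_univ _)
  rw [Finset.mem_Ico] at hv hw
  have hmem : pairEdge k ℓ v w \ (range (ℓ - 2)).image Sum.inl ∈
      linkE (expEdges k ℓ r) ((range (ℓ - 2)).image Sum.inl) := by
    refine Finset.mem_image.2 ⟨_, Finset.mem_filter.2
      ⟨pairEdge_mem hℓ hv.1 hw.1 hvw hv.2 hw.2, ?_⟩, rfl⟩
    intro x hx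
    obtain ⟨i, hi, rfl⟩ := Finset.mem_image.1 hx
    exact inl_mem_pairEdge.2 (Or.inr (Or.inr (Finset.mem_range.1 hi)))
  have h1 := hP _ hmem (P (Sum.inl v))
  have hin : ∀ u : ℕ, (u = v ∨ u = w) → P (Sum.inl u) = P (Sum.inl v) →
      (Sum.inl u : ExpV) ∈ (pairEdge k ℓ v w \ (range (ℓ - 2)).image Sum.inl).filter
        fun z => P z = P (Sum.inl v) := by
    intro u hu hPu
    refine Finset.mem_filter.2 ⟨Finset.mem_sdiff.2 ⟨inl_mem_pairEdge.2 (by tauto), ?_⟩, hPu⟩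
    simp
    omega
  exact hvw (Sum.inl_injective (Finset.card_le_one.1 h1.le _ (hin v (Or.inl rfl) rfl) _
    (hin w (Or.inr rfl) hPvw.symm)))

/-! ### Vanishing orders -/

/-- Ranks of original vertices do not depend on the edge `pairEdge k ℓ v w`, so they would inject
`r` vertices into `{1, …, k}`. -/
lemma no_vanishing_order {k ℓ r : ℕ} (hℓ : 2 ≤ ℓ) (hℓk : ℓ < k) (hkr : k < r) (σ : ExpV → ℕ) :
    ¬ IsVanishingOrder (ℓ - 1) (expVerts k ℓ r) (expEdges k ℓ r) σ := by
  rintro ⟨hord, φ, hφ⟩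
  have hinj : ∀ e ∈ expEdges k ℓ r, Set.InjOn σ ↑e := fun e he =>
    hord.injOn.mono (Finset.coe_subset.2 (edge_subset he))
  -- Moving the second free vertex keeps the ranks on `{0, …, ℓ - 3} ∪ {v}`.
  have move : ∀ v w w' x : ℕ, ℓ - 2 ≤ v → v < r → ℓ - 2 ≤ w → w < r → ℓ - 2 ≤ w' → w' < r →
      v ≠ w → v ≠ w' → (x = v ∨ x < ℓ - 2) →
      rankIn (pairEdge k ℓ v w) σ (Sum.inl x) = rankIn (pairEdge k ℓ v w') σ (Sum.inl x) := by
    intro v w w' x hv hvr hw hwr hw' hwr' hvw hvw' hx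
    have he := pairEdge_mem (k := k) hℓ hv hw hvw hvr hwr
    have hf := pairEdge_mem (k := k) hℓ hv hw' hvw' hvr hwr'
    have hsub : ∀ u : ℕ, (insert v (range (ℓ - 2))).image Sum.inl ⊆ pairEdge k ℓ v u := by
      intro u y hy
      obtain ⟨i, hi, rfl⟩ := Finset.mem_image.1 hy
      rw [Finset.mem_insert, Finset.mem_range] at hi
      exact inl_mem_pairEdge.2 (by tauto)
    have hcard : ((insert v (range (ℓ - 2))).image (Sum.inl : ℕ → ExpV)).card = ℓ - 1 := by
      rw [Finset.card_image_of_injective _ Sum.inl_injective, Finset.card_insert_of_notMem,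
        Finset.card_range]
      · omega
      · simp; omega
    refine rankIn_eq_of_image_eq (hinj _ he) (hinj _ hf) (hsub w) (hsub w')
      ((hφ _ he _ (hsub w) hcard).symm.trans (hφ _ hf _ (hsub w') hcard)) ?_
    refine Finset.mem_image_of_mem _ ?_
    rw [Finset.mem_insert, Finset.mem_range]
    exact hx
  -- `d x` is the rank of `x` in one chosen edge through `x`: the second free vertex `p x` is `x`
  -- itself unless `x` already lies in `{0, …, ℓ - 2}`.
  let p : ℕ → ℕ := fun x => if x ≤ ℓ - 2 then ℓ - 1 else x
  let d : ℕ → ℕ := fun x => rankIn (pairEdge k ℓ (ℓ - 2) (p x)) σ (Sum.inl x)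
  have hp : ∀ x < r, ℓ - 2 < p x ∧ p x < r := by
    intro x hx
    simp only [p]
    split_ifs <;> omega
  have hd : ∀ v w x : ℕ, ℓ - 2 ≤ v → v < r → ℓ - 2 ≤ w → w < r → v ≠ w →
      (x = v ∨ x < ℓ - 2) → rankIn (pairEdge k ℓ v w) σ (Sum.inl x) = d x := by
    intro v w x hv hvr hw hwr hvw hx
    have hpx := hp x (by omega)
    by_cases h0 : v = ℓ - 2
    · subst h0
      exact move _ _ _ _ le_rfl hvr hw hwr hpx.1.le hpx.2 hvw hpx.1.ne hx
    · rw [move v w (ℓ - 2) x hv hvr hw hwr le_rfl (by omega) hvw h0 hx, pairEdge_comm]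
      rcases hx with hx | hx
      · have : p x = v := by simp only [p]; split_ifs <;> omega
        simp only [d, this]
      · exact move _ _ _ _ le_rfl (by omega) hv hvr hpx.1.le hpx.2 (by omega) hpx.1.ne
          (Or.inr hx)
  have hcard : (Finset.Icc 1 k).card < (range r).card := by simpa using hkr
  obtain ⟨x, hx, y, hy, hxy, hdxy⟩ := Finset.exists_ne_map_eq_of_card_lt_of_maps_to hcard
    (f := d) (by
      intro x hx
      have hx' : x < r := by simpa using hx
      have hpx := hp x hx'
      have he := pairEdge_mem (k := k) hℓ le_rfl hpx.1.le hpx.1.ne (by omega) hpx.2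
      have hxe : (Sum.inl x : ExpV) ∈ pairEdge k ℓ (ℓ - 2) (p x) := by
        rw [inl_mem_pairEdge]
        simp only [p]
        split_ifs <;> omega
      have h1 : 1 ≤ d x := Finset.card_pos.2 ⟨Sum.inl x, by simp [hxe]⟩
      have h2 : d x ≤ k := (Finset.card_filter_le _ _).trans (edge_card_le hℓk he)
      exact Finset.mem_coe.2 (Finset.mem_Icc.2 ⟨h1, h2⟩))
  rw [Finset.mem_range] at hx hy
  -- An edge containing both `x` and `y`.
  obtain ⟨v, w, hv, hvr, hw, hwr, hvw, hxv, hyv⟩ : ∃ v w, ℓ - 2 ≤ v ∧ v < r ∧ ℓ - 2 ≤ w ∧ w < r ∧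
      v ≠ w ∧ (x = v ∨ x < ℓ - 2) ∧ (y = w ∨ y < ℓ - 2) := by
    by_cases h1 : x < ℓ - 2 <;> by_cases h2 : y < ℓ - 2
    · exact ⟨ℓ - 2, ℓ - 1, by omega⟩
    · by_cases h3 : y = ℓ - 2
      · exact ⟨ℓ - 1, y, by omega⟩
      · exact ⟨ℓ - 2, y, by omega⟩
    · by_cases h3 : x = ℓ - 2
      · exact ⟨x, ℓ - 1, by omega⟩
      · exact ⟨x, ℓ - 2, by omega⟩
    · exact ⟨x, y, by omega⟩
  have hx1 := hd v w x hv hvr hw hwr hvw hxv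
  have hy1 := hd w v y hw hwr hv hvr hvw.symm hyv
  rw [pairEdge_comm] at hy1
  refine hxy (Sum.inl_injective (rankIn_inj (hinj _ (pairEdge_mem hℓ hv hw hvw hvr hwr)) ?_ ?_
    (hx1.trans (hdxy.trans hy1.symm))))
  · exact inl_mem_pairEdge.2 (by tauto)
  · exact inl_mem_pairEdge.2 (by tauto)

/-- For `2 ≤ ℓ < k < r`, some `(ℓ-2)`-subset `S` of the vertex set of the
`k`-expansion `K_r^{(ℓ)+}` has a link that is not `(k-ℓ+2)`-partite; consequently `K_r^{(ℓ)+}`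
has no `(ℓ-1)`-vanishing order. -/
theorem stmt_8 (k ℓ r : ℕ) (hℓ : 2 ≤ ℓ) (hℓk : ℓ < k) (hkr : k < r) :
    (∃ S ⊆ expVerts k ℓ r, S.card = ℓ - 2 ∧
      ¬ IsPartite (k - ℓ + 2) (expVerts k ℓ r \ S) (linkE (expEdges k ℓ r) S)) ∧
    ¬ ∃ σ : ExpV → ℕ, IsVanishingOrder (ℓ - 1) (expVerts k ℓ r) (expEdges k ℓ r) σ := by 
  refine ⟨⟨(range (ℓ - 2)).image Sum.inl, ?_, ?_, link_not_partite hℓ hℓk hkr _⟩, ?_⟩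
  · refine Finset.Subset.trans (Finset.image_subset_image ?_) Finset.subset_union_left
    intro x hx
    rw [Finset.mem_range] at hx ⊢
    omega
  · rw [Finset.card_image_of_injective _ Sum.inl_injective, Finset.card_range]
  · rintro ⟨σ, h⟩
    exact no_vanishing_order hℓ hℓk hkr σ h
end
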